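/- Let n ≥ 1, β ∈ (0,n), and let φ be a doubling Young function satisfying C_β := sup_{t>0} (t^β/φ(t)) ∫_0^t φ(s) s^{-β-1} ds < ∞. Then there exists a constant C = C(β,n,φ) > 0 such that for every u ∈ Ẇ^{β,φ}(ℝⁿ), inf_{c∈ℝ} ‖u − c‖_{L^{φ^{n/(n−β)}}(ℝⁿ)} ≤ C ‖u‖_{Ẇ^{β,φ}(ℝⁿ)}. -/

import Mathlib

/-!
The inequality follows from a pointwise estimate of Hedberg type. After dividing `u` by an admissible
`λ` one has a locally integrable `v` with `∫ g ≤ 1`, where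
`g(x) = ∫ φ(|v(x)-v(y)|) |x-y|^{-n-β} dy` (`innerModular`).

* Jensen's inequality on the ball `B(x,r)` gives `φ(|v(x) - v_{B(x,r)}|) ≤ C r^β g(x)`
  (`point_ball`), and on pairs of balls of radius comparable to `r` it gives
  `φ(|v_B - v_{B'}|) ≤ C r^{β-n}` (`ball_ball`).
* Since `β < n`, the bounds along the balls `B(z, 2^k r)` decay geometrically. A doubling convex `φ`
  satisfies `φ(τ s) ≥ θ φ(s)` for given `θ < 1` and a suitable `τ < 1`, so the increments themselves
  decay geometrically and their sum has `φ`-size at most `C r^{β-n}` (`young_sum`). Hence all averages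
  converge to one constant `c`, with `φ(|v_{B(z,r)} - c|) ≤ C r^{β-n}` (`exists_limit_average`).
* Therefore `φ(|v(x)-c|) ≤ C (r^β g(x) + r^{β-n})` for all `r > 0`; the choice `r = g(x)^{-1/n}` gives
  `φ(|v(x)-c|)^{n/(n-β)} ≤ A^{n/(n-β)} g(x)` (`pointwise_bound`). Integrating, and using
  `φ(t/A) ≤ φ(t)/A`, bounds the Luxemburg norm of `u - λ c` by `A λ`.
-/

open MeasureTheory Metric Set Filter
open scoped ENNReal NNReal Topology Classical

noncomputable section

/-- `φ` is a Young function: convex, continuous on `[0,∞)`, `φ(0)=0`, `φ(t)>0` for `t>0`. -/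
def IsYoung (φ : ℝ → ℝ) : Prop :=
  ContinuousOn φ (Set.Ici 0) ∧ ConvexOn ℝ (Set.Ici 0) φ ∧ φ 0 = 0 ∧ ∀ t > 0, 0 < φ t

/-- `φ` is doubling with constant `K > 1`: `φ(2t) ≤ K φ(t)` for all `t > 0`. -/
def IsDoubling (φ : ℝ → ℝ) (K : ℝ) : Prop :=
  1 < K ∧ ∀ t > 0, φ (2 * t) ≤ K * φ t

/-- The (generalized) inverse of a Young function. -/
def yInv (φ : ℝ → ℝ) (y : ℝ) : ℝ :=
  sInf {t : ℝ | 0 ≤ t ∧ y ≤ φ t}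

/-- `sup_{t>0} (t^β/φ(t)) ∫_0^t φ(s) s^{-β-1} ds ≤ M`. -/
def CbetaLE (β : ℝ) (φ : ℝ → ℝ) (M : ℝ) : Prop :=
  ∀ t > 0,
    ENNReal.ofReal (t ^ β / φ t) *
        (∫⁻ s in Set.Ioc (0 : ℝ) t, ENNReal.ofReal (φ s / s ^ (β + 1))) ≤
      ENNReal.ofReal M

/-- The condition `C_β := sup_{t>0} (t^β/φ(t)) ∫_0^t φ(s) s^{-β-1} ds < ∞`. -/
def CbetaFinite (β : ℝ) (φ : ℝ → ℝ) : Prop :=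
  ∃ M : ℝ, CbetaLE β φ M

/-- The double integral `∫_Ω ∫_Ω φ(|u(x)-u(y)|/λ) |x-y|^{-n-β} dx dy`. -/
def fracIntegral (n : ℕ) (β : ℝ) (φ : ℝ → ℝ) (Ω : Set (EuclideanSpace ℝ (Fin n)))
    (u : EuclideanSpace ℝ (Fin n) → ℝ) (lam : ℝ) : ℝ≥0∞ :=
  ∫⁻ x in Ω, ∫⁻ y in Ω,
    ENNReal.ofReal (φ (|u x - u y| / lam) / dist x y ^ ((n : ℝ) + β))

/-- The fractional Orlicz–Sobolev (Luxemburg-type) seminorm `‖u‖_{Ẇ^{β,φ}(Ω)}`,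
valued in `[0,∞]` (it is `∞` iff no admissible `λ` exists). -/
def fracNorm (n : ℕ) (β : ℝ) (φ : ℝ → ℝ) (Ω : Set (EuclideanSpace ℝ (Fin n)))
    (u : EuclideanSpace ℝ (Fin n) → ℝ) : ℝ≥0∞ :=
  sInf {lam : ℝ≥0∞ | 0 < lam ∧ lam ≠ ∞ ∧ fracIntegral n β φ Ω u lam.toReal ≤ 1}

/-- `u ∈ Ẇ^{β,φ}(Ω)` : locally integrable on `Ω` with finite seminorm. -/
def MemW (n : ℕ) (β : ℝ) (φ : ℝ → ℝ) (Ω : Set (EuclideanSpace ℝ (Fin n)))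
    (u : EuclideanSpace ℝ (Fin n) → ℝ) : Prop :=
  LocallyIntegrableOn u Ω ∧ fracNorm n β φ Ω u ≠ ∞

/-- The Orlicz (Luxemburg) norm `‖u‖_{L^ψ(Ω)}`, valued in `[0,∞]`. -/
def luxNorm (n : ℕ) (ψ : ℝ → ℝ) (Ω : Set (EuclideanSpace ℝ (Fin n)))
    (u : EuclideanSpace ℝ (Fin n) → ℝ) : ℝ≥0∞ :=
  sInf {lam : ℝ≥0∞ | 0 < lam ∧ lam ≠ ∞ ∧
    (∫⁻ x in Ω, ENNReal.ofReal (ψ (|u x| / lam.toReal))) ≤ 1}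

/-- `Ω` is Ahlfors `n`-regular: `|B(x,r) ∩ Ω| ≥ θ rⁿ` for all `x ∈ Ω`, `0 < r < 2 diam Ω`. -/
def AhlforsRegular (n : ℕ) (Ω : Set (EuclideanSpace ℝ (Fin n))) : Prop :=
  ∃ θ > (0 : ℝ), ∀ x ∈ Ω, ∀ r : ℝ, 0 < r → ENNReal.ofReal r < 2 * EMetric.diam Ω →
    ENNReal.ofReal (θ * r ^ n) ≤ volume (Metric.ball x r ∩ Ω)

/-- `Ω` is a `Ẇ^{β,φ}`-extension domain: there are `C > 0` and a linear operator `E`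
from `Ẇ^{β,φ}(Ω)` to `Ẇ^{β,φ}(ℝⁿ)` with `Eu = u` a.e. on `Ω` and
`‖Eu‖_{Ẇ^{β,φ}(ℝⁿ)} ≤ C ‖u‖_{Ẇ^{β,φ}(Ω)}`. -/
def IsExtensionDomain (n : ℕ) (β : ℝ) (φ : ℝ → ℝ)
    (Ω : Set (EuclideanSpace ℝ (Fin n))) : Prop :=
  ∃ C > (0 : ℝ), ∃ E : (EuclideanSpace ℝ (Fin n) → ℝ) → (EuclideanSpace ℝ (Fin n) → ℝ),
    (∀ u v, MemW n β φ Ω u → MemW n β φ Ω v → E (u + v) = E u + E v) ∧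
    (∀ (c : ℝ) (u), MemW n β φ Ω u → E (c • u) = c • E u) ∧
    (∀ u, MemW n β φ Ω u →
      MemW n β φ Set.univ (E u) ∧
      (∀ᵐ x ∂(volume.restrict Ω), E u x = u x) ∧
      fracNorm n β φ Set.univ (E u) ≤ ENNReal.ofReal C * fracNorm n β φ Ω u)

end

/-! ### Young functions -/

theorem young_scale {φ : ℝ → ℝ} (hφ : IsYoung φ) {a t : ℝ} (ha : 0 ≤ a) (ha1 : a ≤ 1)
    (ht : 0 ≤ t) : φ (a * t) ≤ a * φ t := by
  have h := hφ.2.1.2 (x := t) (y := 0) ht (by simp) ha (sub_nonneg.2 ha1) (by ring)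
  simpa [hφ.2.2.1] using h

theorem young_nonneg {φ : ℝ → ℝ} (hφ : IsYoung φ) {t : ℝ} (ht : 0 ≤ t) : 0 ≤ φ t := by
  rcases ht.eq_or_lt with h | h
  · rw [← h, hφ.2.2.1]
  · exact (hφ.2.2.2 t h).le

theorem young_strictMono {φ : ℝ → ℝ} (hφ : IsYoung φ) : StrictMonoOn φ (Ici 0) := by
  intro s hs t ht hst
  have ht0 : 0 < t := lt_of_le_of_lt hs hst
  have h := young_scale hφ (a := s / t) (t := t) (div_nonneg hs ht0.le)
    ((div_le_one ht0).2 hst.le) ht0.le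
  rw [div_mul_cancel₀ _ ht0.ne'] at h
  have h1 : s / t < 1 := (div_lt_one ht0).2 hst
  nlinarith [hφ.2.2.2 t ht0]

/-- The even extension of a Young function is convex on the whole line, which lets Jensen's
inequality be applied to signed functions. -/
theorem young_even_convex {φ : ℝ → ℝ} (hφ : IsYoung φ) :
    ConvexOn ℝ univ (fun t : ℝ => φ |t|) := by
  refine ⟨convex_univ, fun x _ y _ a b ha hb hab => ?_⟩
  have h1 : |a • x + b • y| ≤ a • |x| + b • |y| := by
    simpa [abs_mul, abs_of_nonneg ha, abs_of_nonneg hb] using abs_add_le (a * x) (b * y)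
  refine ((young_strictMono hφ).monotoneOn (mem_Ici.2 (abs_nonneg _)) ?_ h1).trans
    (hφ.2.1.2 (mem_Ici.2 (abs_nonneg x)) (mem_Ici.2 (abs_nonneg y)) ha hb hab)
  exact add_nonneg (mul_nonneg ha (abs_nonneg _)) (mul_nonneg hb (abs_nonneg _))

theorem young_even_continuous {φ : ℝ → ℝ} (hφ : IsYoung φ) :
    Continuous (fun t : ℝ => φ |t|) :=
  hφ.1.comp_continuous continuous_abs (fun t => abs_nonneg t)

theorem young_surj {φ : ℝ → ℝ} (hφ : IsYoung φ) {y : ℝ} (hy : 0 ≤ y) :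
    ∃ T, 0 ≤ T ∧ φ T = y := by
  have h1 := hφ.2.2.2 1 one_pos
  set t : ℝ := 1 + y / φ 1 with ht
  have hyt : 0 ≤ y / φ 1 := div_nonneg hy h1.le
  have ht1 : 1 ≤ t := by linarith
  have hbig : y ≤ φ t := by
    have h := young_scale hφ (a := 1 / t) (t := t) (by positivity)
      ((div_le_one (by linarith)).2 ht1) (by linarith)
    rw [div_mul_cancel₀ _ (by linarith)] at h
    rw [div_mul_eq_mul_div, one_mul, le_div_iff₀ (by linarith)] at h
    have : φ 1 * t = φ 1 + y := by rw [ht]; field_simp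
    linarith
  obtain ⟨T, hT, hTy⟩ := intermediate_value_Icc (zero_le_one.trans ht1)
    (hφ.1.mono Icc_subset_Ici_self) (show y ∈ Icc (φ 0) (φ t) from ⟨by rw [hφ.2.2.1]; exact hy, hbig⟩)
  exact ⟨T, hT.1, hTy⟩

theorem young_doubling_nonneg {φ : ℝ → ℝ} (hφ : IsYoung φ) {K : ℝ} (hK : IsDoubling φ K)
    {t : ℝ} (ht : 0 ≤ t) : φ (2 * t) ≤ K * φ t := by
  rcases ht.eq_or_lt with h | h
  · rw [← h]; simp [hφ.2.2.1]
  · exact hK.2 t h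

theorem young_doubling_pow {φ : ℝ → ℝ} (hφ : IsYoung φ) {K : ℝ} (hK : IsDoubling φ K)
    (m : ℕ) {t : ℝ} (ht : 0 ≤ t) : φ (2 ^ m * t) ≤ K ^ m * φ t := by
  induction m with
  | zero => simp
  | succ k ih =>
    have h := young_doubling_nonneg hφ hK (t := 2 ^ k * t) (by positivity)
    have hK0 : 0 < K := one_pos.trans hK.1
    calc φ (2 ^ (k + 1) * t) = φ (2 * (2 ^ k * t)) := by ring_nf
      _ ≤ K * φ (2 ^ k * t) := h
      _ ≤ K * (K ^ k * φ t) := by gcongr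
      _ = _ := by ring

theorem young_add {φ : ℝ → ℝ} (hφ : IsYoung φ) {K : ℝ} (hK : IsDoubling φ K)
    {a b : ℝ} (ha : 0 ≤ a) (hb : 0 ≤ b) : φ (a + b) ≤ K * (φ a + φ b) := by
  have hm := (young_strictMono hφ).monotoneOn
  have hK0 : 0 < K := one_pos.trans hK.1
  have h1 : φ (a + b) ≤ φ (2 * max a b) := by
    apply hm (add_nonneg ha hb) (show (0 : ℝ) ≤ 2 * max a b from by positivity)
    linarith [le_max_left a b, le_max_right a b]
  refine h1.trans ((young_doubling_nonneg hφ hK (by positivity)).trans ?_)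
  have := young_nonneg hφ ha
  have := young_nonneg hφ hb
  gcongr
  rcases max_choice a b with h | h <;> rw [h] <;> linarith

/-- Doubling and convexity make `φ` decay at most at a slow geometric rate along a suitable
geometric sequence: for every `θ < 1` there is `τ < 1` with `φ (τ s) ≥ θ φ s`. -/
theorem young_slow_decay {φ : ℝ → ℝ} (hφ : IsYoung φ) {K : ℝ} (hK : IsDoubling φ K)
    {θ : ℝ} (hθ : 0 < θ) (hθ1 : θ < 1) :
    ∃ τ, 0 < τ ∧ τ < 1 ∧ ∀ s, 0 ≤ s → θ * φ s ≤ φ (τ * s) := by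
  have hK1 : 0 < K - 1 := sub_pos.2 hK.1
  have hθ' : 1 < 1 / θ := (one_lt_div hθ).2 hθ1
  set α := min 1 ((1 / θ - 1) / (K - 1)) with hα
  have hα0 : 0 < α := lt_min one_pos (div_pos (by linarith) hK1)
  have hα1 : α ≤ 1 := min_le_left _ _
  have hαK : α * (K - 1) ≤ 1 / θ - 1 := (le_div_iff₀ hK1).1 (min_le_right _ _)
  refine ⟨1 / (1 + α), by positivity, (div_lt_one (by linarith)).2 (by linarith), fun s hs => ?_⟩
  set t := 1 / (1 + α) * s with ht
  have ht0 : 0 ≤ t := by positivity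
  -- `s` is the convex combination of `t` and `2 t` with weights `1 - α` and `α`
  have hst : s = (1 - α) • t + α • (2 * t) := by
    simp only [smul_eq_mul, ht]; field_simp; ring
  have h := hφ.2.1.2 (x := t) (y := 2 * t) ht0 (show (0 : ℝ) ≤ 2 * t by positivity)
    (sub_nonneg.2 hα1) hα0.le (by ring)
  rw [← hst] at h
  simp only [smul_eq_mul] at h
  have h2 := young_doubling_nonneg hφ hK ht0
  have hφt := young_nonneg hφ ht0
  have h3 : φ s ≤ (1 / θ) * φ t := by
    nlinarith [mul_le_mul_of_nonneg_left h2 hα0.le, mul_le_mul_of_nonneg_right hαK hφt]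
  calc θ * φ s ≤ θ * ((1 / θ) * φ t) := by gcongr
    _ = φ t := by field_simp

/-- If the increments of a chain have `φ`-size decaying geometrically, the `φ`-size of their sum is
controlled by that of the first bound. -/
theorem young_sum {φ : ℝ → ℝ} (hφ : IsYoung φ) {K : ℝ} (hK : IsDoubling φ K)
    {θ : ℝ} (hθ : 0 < θ) (hθ1 : θ < 1) :
    ∃ C > 0, ∀ (y : ℝ) (d : ℕ → ℝ), 0 ≤ y → (∀ k, 0 ≤ d k) → (∀ k, φ (d k) ≤ θ ^ k * y) →
      ∃ S, Summable d ∧ (∑' k, d k) ≤ S ∧ 0 ≤ S ∧ φ S ≤ C * y := by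
  obtain ⟨τ, hτ, hτ1, hdec⟩ := young_slow_decay hφ hK hθ hθ1
  obtain ⟨m, hm⟩ := pow_unbounded_of_one_lt (1 - τ)⁻¹ (one_lt_two (α := ℝ))
  have hK0 : 0 < K := one_pos.trans hK.1
  refine ⟨K ^ m, by positivity, fun y d hy hd hdy => ?_⟩
  obtain ⟨T, hT, hTy⟩ := young_surj hφ hy
  have hpow : ∀ k : ℕ, θ ^ k * y ≤ φ (τ ^ k * T) := by
    intro k
    induction k with
    | zero => simp [hTy]
    | succ k ih =>
      calc θ ^ (k + 1) * y = θ * (θ ^ k * y) := by ring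
        _ ≤ θ * φ (τ ^ k * T) := by gcongr
        _ ≤ φ (τ * (τ ^ k * T)) := hdec _ (by positivity)
        _ = _ := by ring_nf
  have hdT : ∀ k, d k ≤ τ ^ k * T := fun k =>
    ((young_strictMono hφ).le_iff_le (hd k) (show (0 : ℝ) ≤ τ ^ k * T by positivity)).1
      ((hdy k).trans (hpow k))
  have hg : Summable (fun k : ℕ => τ ^ k * T) :=
    (summable_geometric_of_lt_one hτ.le hτ1).mul_right T
  have hs : Summable d := Summable.of_nonneg_of_le hd hdT hg
  refine ⟨2 ^ m * T, hs, ?_, by positivity, ?_⟩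
  · calc ∑' k, d k ≤ ∑' k : ℕ, τ ^ k * T := hs.tsum_le_tsum hdT hg
      _ = (1 - τ)⁻¹ * T := by rw [tsum_mul_right, tsum_geometric_of_lt_one hτ.le hτ1]
      _ ≤ 2 ^ m * T := by gcongr
  · rw [← hTy]; exact young_doubling_pow hφ hK m hT

/-- Jensen's inequality in `[0,∞]`, with no integrability assumption on `φ ∘ |f|`. -/
theorem young_jensen {φ : ℝ → ℝ} (hφ : IsYoung φ) {α : Type*} [MeasurableSpace α]
    {μ : Measure α} {s : Set α} (h0 : μ s ≠ 0) (ht : μ s ≠ ∞) {f : α → ℝ}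
    (hf : IntegrableOn f s μ) (a : ℝ) :
    ENNReal.ofReal (φ |(⨍ x in s, f x ∂μ) - a|) * μ s ≤
      ∫⁻ x in s, ENNReal.ofReal (φ |f x - a|) ∂μ := by
  have hcont := young_even_continuous hφ
  have hmeas : AEStronglyMeasurable (fun x => φ |f x - a|) (μ.restrict s) :=
    (hcont.comp (continuous_sub_right a)).comp_aestronglyMeasurable hf.aestronglyMeasurable
  by_cases hint : IntegrableOn (fun x => φ |f x - a|) s μ
  · have hcv : ConvexOn ℝ univ (fun t : ℝ => φ |t - a|) := by
      have := (young_even_convex hφ).translate_left (-a)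
      simpa [Function.comp_def, sub_eq_add_neg] using this
    have h := hcv.map_set_average_le (μ := μ) (t := s) (f := f)
      (hcont.comp (continuous_sub_right a)).continuousOn isClosed_univ h0 ht (by simp) hf hint
    rw [setAverage_eq μ (fun x => φ |f x - a|)] at h
    rw [← ofReal_integral_eq_lintegral_ofReal hint
      (Eventually.of_forall fun x => young_nonneg hφ (abs_nonneg _)),
      ← ENNReal.ofReal_toReal ht, ← ENNReal.ofReal_mul (young_nonneg hφ (abs_nonneg _))]
    apply ENNReal.ofReal_le_ofReal
    have hpos : 0 < (μ s).toReal := ENNReal.toReal_pos h0 ht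
    rw [smul_eq_mul, Measure.real, inv_mul_eq_div, le_div_iff₀ hpos] at h
    exact h
  · have : ∫⁻ x in s, ENNReal.ofReal (φ |f x - a|) ∂μ = ∞ := by
      by_contra hne
      exact hint ((lintegral_ofReal_ne_top_iff_integrable hmeas
        (Eventually.of_forall fun x => young_nonneg hφ (abs_nonneg _))).1 hne)
    rw [this]; exact le_top

/-! ### Averages over balls and the pointwise estimate -/

section Balls

variable {n : ℕ} {β : ℝ} {φ : ℝ → ℝ} {v : EuclideanSpace ℝ (Fin n) → ℝ}

/-- The inner integral `∫ φ(|v(x)-v(y)|) |x-y|^{-n-β} dy` of the fractional modular. -/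
noncomputable def innerModular (n : ℕ) (β : ℝ) (φ : ℝ → ℝ) (v : EuclideanSpace ℝ (Fin n) → ℝ)
    (x : EuclideanSpace ℝ (Fin n)) : ℝ≥0∞ :=
  ∫⁻ y, ENNReal.ofReal (φ |v x - v y| / dist x y ^ ((n : ℝ) + β))

/-- The volume of the unit ball of `ℝⁿ`, as a real number. -/
noncomputable def unitVol (n : ℕ) : ℝ := (volume (ball (0 : EuclideanSpace ℝ (Fin n)) 1)).toReal

theorem unitVol_pos (n : ℕ) : 0 < unitVol n :=
  ENNReal.toReal_pos (measure_ball_pos _ _ one_pos).ne' measure_ball_lt_top.ne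

theorem volume_ball_eq (z : EuclideanSpace ℝ (Fin n)) {r : ℝ} (hr : 0 < r) :
    volume (ball z r) = ENNReal.ofReal (unitVol n * r ^ n) := by
  rw [Measure.addHaar_ball_of_pos _ _ hr, mul_comm, ENNReal.ofReal_mul (unitVol_pos n).le, unitVol,
    ENNReal.ofReal_toReal measure_ball_lt_top.ne]
  simp

/-- Bounding the kernel `|x-y|^{-n-β}` from below on pairs at distance at most `D`; on the diagonal
the estimate survives the convention `a / 0 = 0` because `φ 0 = 0`. -/
theorem kernel_bound (hφ : IsYoung φ) (hβ : 0 < β) (x y : EuclideanSpace ℝ (Fin n))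
    {D : ℝ} (hxy : dist x y ≤ D) :
    ENNReal.ofReal (φ |v x - v y|) ≤ ENNReal.ofReal (D ^ ((n : ℝ) + β)) *
      ENNReal.ofReal (φ |v x - v y| / dist x y ^ ((n : ℝ) + β)) := by
  have hD : 0 ≤ D := dist_nonneg.trans hxy
  rw [← ENNReal.ofReal_mul (Real.rpow_nonneg hD _)]
  apply ENNReal.ofReal_le_ofReal
  rcases eq_or_ne x y with rfl | hne
  · simp [hφ.2.2.1]
  · have hd : 0 < dist x y := dist_pos.2 hne
    have hp : 0 < dist x y ^ ((n : ℝ) + β) := Real.rpow_pos_of_pos hd _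
    have hle : dist x y ^ ((n : ℝ) + β) ≤ D ^ ((n : ℝ) + β) :=
      Real.rpow_le_rpow hd.le hxy (by positivity)
    have h0 := young_nonneg hφ (abs_nonneg (v x - v y))
    rw [mul_div_assoc', le_div_iff₀ hp, mul_comm]
    gcongr

theorem integrableOn_ball (hv : LocallyIntegrable v) (z : EuclideanSpace ℝ (Fin n)) (r : ℝ) :
    IntegrableOn v (ball z r) :=
  (hv.integrableOn_isCompact (isCompact_closedBall z r)).mono_set ball_subset_closedBall

/-- The oscillation between a point and the average over a ball, by Jensen's inequality and the
kernel bound. -/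
theorem point_ball (hφ : IsYoung φ) (hβ : 0 < β) (hv : LocallyIntegrable v)
    (x z : EuclideanSpace ℝ (Fin n)) {r D : ℝ} (hr : 0 < r)
    (hD : ∀ y ∈ ball z r, dist x y ≤ D) :
    ENNReal.ofReal (φ |(⨍ y in ball z r, v y) - v x|) * volume (ball z r) ≤
      ENNReal.ofReal (D ^ ((n : ℝ) + β)) * innerModular n β φ v x := by
  refine (young_jensen hφ (measure_ball_pos _ _ hr).ne' measure_ball_lt_top.ne
    (integrableOn_ball hv z r) (v x)).trans ?_
  rw [innerModular, ← lintegral_const_mul' _ _ ENNReal.ofReal_ne_top]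
  refine (setLIntegral_mono' measurableSet_ball fun y hy => ?_).trans
    (setLIntegral_le_lintegral (ball z r) _)
  rw [abs_sub_comm]
  exact kernel_bound hφ hβ x y (hD y hy)

/-- The oscillation between the averages over two balls, by applying Jensen's inequality on each. -/
theorem ball_ball (hφ : IsYoung φ) (hβ : 0 < β) (hv : LocallyIntegrable v)
    (hI : ∫⁻ x, innerModular n β φ v x ≤ 1)
    (z w : EuclideanSpace ℝ (Fin n)) {r s D : ℝ} (hr : 0 < r) (hs : 0 < s) (hD0 : 0 ≤ D)
    (hD : ∀ x ∈ ball z r, ∀ y ∈ ball w s, dist x y ≤ D) :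
    φ |(⨍ y in ball z r, v y) - ⨍ y in ball w s, v y| ≤
      D ^ ((n : ℝ) + β) / (unitVol n * r ^ n * (unitVol n * s ^ n)) := by
  have hω := unitVol_pos n
  have key : ENNReal.ofReal (φ |(⨍ y in ball z r, v y) - ⨍ y in ball w s, v y|) *
      volume (ball z r) * volume (ball w s) ≤ ENNReal.ofReal (D ^ ((n : ℝ) + β)) := by
    calc _ ≤ (∫⁻ x in ball z r, ENNReal.ofReal (φ |v x - ⨍ y in ball w s, v y|)) *
          volume (ball w s) := by
          gcongr
          exact young_jensen hφ (measure_ball_pos _ _ hr).ne' measure_ball_lt_top.ne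
            (integrableOn_ball hv z r) _
      _ = ∫⁻ x in ball z r, ENNReal.ofReal (φ |v x - ⨍ y in ball w s, v y|) *
          volume (ball w s) := (lintegral_mul_const' _ _ measure_ball_lt_top.ne).symm
      _ ≤ ∫⁻ x in ball z r, ENNReal.ofReal (D ^ ((n : ℝ) + β)) * innerModular n β φ v x := by
          refine setLIntegral_mono' measurableSet_ball fun x hx => ?_
          rw [abs_sub_comm]
          exact point_ball hφ hβ hv x w hs (hD x hx)
      _ ≤ ∫⁻ x, ENNReal.ofReal (D ^ ((n : ℝ) + β)) * innerModular n β φ v x :=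
          setLIntegral_le_lintegral _ _
      _ = ENNReal.ofReal (D ^ ((n : ℝ) + β)) * ∫⁻ x, innerModular n β φ v x :=
          lintegral_const_mul' _ _ ENNReal.ofReal_ne_top
      _ ≤ ENNReal.ofReal (D ^ ((n : ℝ) + β)) * 1 := by gcongr
      _ = _ := mul_one _
  have h0 := young_nonneg hφ (abs_nonneg ((⨍ y in ball z r, v y) - ⨍ y in ball w s, v y))
  rw [volume_ball_eq z hr, volume_ball_eq w hs, ← ENNReal.ofReal_mul h0,
    ← ENNReal.ofReal_mul (by positivity),
    ENNReal.ofReal_le_ofReal_iff (Real.rpow_nonneg hD0 _)] at key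
  rw [le_div_iff₀ (by positivity), ← mul_assoc]
  exact key

/-- Averages over balls of radius `r` are close to one common constant, with the rate `r^{β-n}`:
telescope along the balls `B(z, 2ᵏ r)`. The limit does not depend on `z` and `r` since balls of
comparable large radius have nearly equal averages. -/
theorem exists_limit_average (hφ : IsYoung φ) {K : ℝ} (hK : IsDoubling φ K)
    (hβ : β ∈ Ioo (0 : ℝ) (n : ℝ)) :
    ∃ C > 0, ∀ v : EuclideanSpace ℝ (Fin n) → ℝ, LocallyIntegrable v →
      ∫⁻ x, innerModular n β φ v x ≤ 1 →
      ∃ c : ℝ, ∀ (z : EuclideanSpace ℝ (Fin n)) (r : ℝ), 0 < r →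
        φ |(⨍ y in ball z r, v y) - c| ≤ C * r ^ (β - n) := by
  have hω := unitVol_pos n
  have h2 : (0 : ℝ) < 2 := two_pos
  set θ : ℝ := 2 ^ (β - n) with hθ
  have hθ0 : 0 < θ := Real.rpow_pos_of_pos h2 _
  have hθ1 : θ < 1 := Real.rpow_lt_one_of_one_lt_of_neg one_lt_two (by linarith [hβ.2])
  obtain ⟨C, hC, hsum⟩ := young_sum hφ hK hθ0 hθ1
  set C₁ : ℝ := 4 ^ ((n : ℝ) + β) / (unitVol n * (unitVol n * 2 ^ n)) with hC₁
  have hC₁0 : 0 < C₁ := by positivity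
  refine ⟨C * C₁, by positivity, fun v hv hI => ?_⟩
  -- homogeneity: scaling all lengths by `2 ^ k` produces the factor `θ ^ k`
  have hscale : ∀ (k : ℕ) (D r s : ℝ), 0 ≤ D → 0 < r → 0 < s →
      (2 ^ k * D) ^ ((n : ℝ) + β) / (unitVol n * (2 ^ k * r) ^ n * (unitVol n * (2 ^ k * s) ^ n)) =
        θ ^ k * (D ^ ((n : ℝ) + β) / (unitVol n * r ^ n * (unitVol n * s ^ n))) := by
    intro k D r s hD hr hs
    have e1 : θ ^ k = ((2 : ℝ) ^ k) ^ ((n : ℝ) + β) / (((2 : ℝ) ^ k) ^ n * ((2 : ℝ) ^ k) ^ n) := by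
      rw [hθ, ← Real.rpow_natCast (2 ^ (β - n)) k, ← Real.rpow_mul h2.le,
        ← Real.rpow_natCast ((2 : ℝ) ^ k) n, ← Real.rpow_natCast (2 : ℝ) k,
        ← Real.rpow_mul h2.le, ← Real.rpow_mul h2.le, ← Real.rpow_add h2, ← Real.rpow_sub h2]
      congr 1; ring
    rw [e1, Real.mul_rpow (by positivity) hD, mul_pow, mul_pow]
    field_simp
  have hstep : ∀ (z : EuclideanSpace ℝ (Fin n)) (r : ℝ), 0 < r → ∀ k : ℕ,
      φ (dist (⨍ y in ball z (2 ^ k * r), v y) (⨍ y in ball z (2 ^ (k + 1) * r), v y)) ≤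
        θ ^ k * (C₁ * r ^ (β - n)) := by
    intro z r hr k
    have h := ball_ball hφ hβ.1 hv hI z z (r := 2 ^ k * r) (s := 2 ^ k * (2 * r))
      (D := 2 ^ k * (4 * r)) (by positivity) (by positivity) (by positivity) (by
        intro x hx y hy
        have := dist_triangle_right x y z
        rw [mem_ball] at hx hy
        have : 0 < 2 ^ k * r := by positivity
        linarith)
    rw [hscale k _ _ _ (by positivity) hr (by positivity)] at h
    rw [Real.dist_eq, show (2 : ℝ) ^ (k + 1) * r = 2 ^ k * (2 * r) by ring]
    refine h.trans (le_of_eq ?_)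
    congr 1
    rw [Real.mul_rpow (by norm_num) hr.le, Real.rpow_sub hr, Real.rpow_add hr, Real.rpow_natCast,
      mul_pow, hC₁]
    field_simp
  have hlim : ∀ (z : EuclideanSpace ℝ (Fin n)) (r : ℝ), 0 < r → ∃ a : ℝ,
      Tendsto (fun k : ℕ => ⨍ y in ball z (2 ^ k * r), v y) atTop (𝓝 a) ∧
      φ |(⨍ y in ball z r, v y) - a| ≤ C * C₁ * r ^ (β - n) := by
    intro z r hr
    obtain ⟨S, hs, hS, hS0, hφS⟩ := hsum (C₁ * r ^ (β - n)) _ (by positivity)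
      (fun k => dist_nonneg) (hstep z r hr)
    obtain ⟨a, ha⟩ := cauchySeq_tendsto_of_complete (cauchySeq_of_summable_dist hs)
    refine ⟨a, ha, ?_⟩
    have h := (dist_le_tsum_dist_of_tendsto₀ hs ha).trans hS
    simp only [pow_zero, one_mul, Real.dist_eq] at h
    refine ((young_strictMono hφ).monotoneOn (mem_Ici.2 (abs_nonneg _)) hS0 h).trans ?_
    rwa [mul_assoc]
  obtain ⟨c, hc, -⟩ := hlim 0 1 one_pos
  refine ⟨c, fun z r hr => ?_⟩
  obtain ⟨a, ha, hbd⟩ := hlim z r hr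
  suffices a = c by rwa [← this]
  have ht : Tendsto (fun k : ℕ => φ |(⨍ y in ball z (2 ^ k * r), v y) -
      ⨍ y in ball 0 (2 ^ k * 1), v y|) atTop (𝓝 (φ |a - c|)) :=
    ((young_even_continuous hφ).tendsto _).comp (ha.sub hc)
  have h0 : φ |a - c| ≤ 0 := by
    have hg : Tendsto (fun k : ℕ => θ ^ k * ((r + 1 + dist z 0) ^ ((n : ℝ) + β) /
        (unitVol n * r ^ n * (unitVol n * 1 ^ n)))) atTop (𝓝 0) := by
      simpa using (tendsto_pow_atTop_nhds_zero_of_lt_one hθ0.le hθ1).mul_const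
        ((r + 1 + dist z 0) ^ ((n : ℝ) + β) / (unitVol n * r ^ n * (unitVol n * 1 ^ n)))
    refine le_of_tendsto_of_tendsto' ht hg fun k => ?_
    rw [← hscale k _ _ _ (by positivity) hr one_pos]
    refine ball_ball hφ hβ.1 hv hI z 0 (by positivity) (by positivity) (by positivity) ?_
    intro x hx y hy
    rw [mem_ball] at hx hy
    have h1 := dist_triangle4 x z 0 y
    rw [dist_comm 0 y] at h1
    have h2 : dist z 0 ≤ 2 ^ k * dist z 0 :=
      le_mul_of_one_le_left dist_nonneg (one_le_pow₀ one_le_two)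
    linarith
  by_contra hne
  exact absurd (hφ.2.2.2 _ (abs_pos.2 (sub_ne_zero.2 hne))) (not_lt.2 h0)

/-- The pointwise bound of Hedberg type: split `v x - c` at scale `r` and optimise in `r`. -/
theorem pointwise_bound (hφ : IsYoung φ) {K : ℝ} (hK : IsDoubling φ K)
    (hβ : β ∈ Ioo (0 : ℝ) (n : ℝ)) :
    ∃ A : ℝ, 1 ≤ A ∧ ∀ v : EuclideanSpace ℝ (Fin n) → ℝ, LocallyIntegrable v →
      ∫⁻ x, innerModular n β φ v x ≤ 1 →
      ∃ c : ℝ, ∀ x, ENNReal.ofReal (φ |v x - c| ^ ((n : ℝ) / (n - β))) ≤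
        ENNReal.ofReal (A ^ ((n : ℝ) / (n - β))) * innerModular n β φ v x := by
  obtain ⟨C, hC, hlim⟩ := exists_limit_average hφ hK hβ
  have hω := unitVol_pos n
  have hK0 : 0 < K := one_pos.trans hK.1
  have hn0 : (0 : ℝ) < n := hβ.1.trans hβ.2
  have hnβ : 0 < (n : ℝ) - β := sub_pos.2 hβ.2
  set B : ℝ := K * (1 / unitVol n + C) with hB
  have hB0 : 0 < B := by positivity
  refine ⟨max 1 B, le_max_left _ _, fun v hv hI => ?_⟩
  obtain ⟨c, hc⟩ := hlim v hv hI
  refine ⟨c, fun x => ?_⟩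
  have hA : 0 < max 1 B := lt_max_of_lt_left one_pos
  rcases eq_or_ne (innerModular n β φ v x) ∞ with htop | htop
  · rw [htop, ENNReal.mul_top (by simpa using Real.rpow_pos_of_pos hA _)]
    exact le_top
  set G := (innerModular n β φ v x).toReal with hG
  have hG0 : 0 ≤ G := ENNReal.toReal_nonneg
  have hGeq : innerModular n β φ v x = ENNReal.ofReal G := (ENNReal.ofReal_toReal htop).symm
  have hsplit : ∀ r : ℝ, 0 < r →
      φ |v x - c| ≤ K * (1 / unitVol n * (r ^ β * G) + C * r ^ (β - n)) := by
    intro r hr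
    have h1 := point_ball hφ hβ.1 hv x x (D := r) hr
      (fun y hy => by rw [dist_comm]; exact (mem_ball.1 hy).le)
    rw [hGeq, volume_ball_eq x hr, ← ENNReal.ofReal_mul (young_nonneg hφ (abs_nonneg _)),
      ← ENNReal.ofReal_mul (by positivity),
      ENNReal.ofReal_le_ofReal_iff (by positivity), ← le_div_iff₀ (by positivity)] at h1
    have h2 : φ |v x - ⨍ y in ball x r, v y| ≤ 1 / unitVol n * (r ^ β * G) := by
      rw [abs_sub_comm]
      refine h1.trans (le_of_eq ?_)
      rw [Real.rpow_add hr, Real.rpow_natCast]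
      field_simp
    have h3 := hc x r hr
    calc φ |v x - c| ≤ φ (|v x - ⨍ y in ball x r, v y| + |(⨍ y in ball x r, v y) - c|) :=
          (young_strictMono hφ).monotoneOn (mem_Ici.2 (abs_nonneg _))
            (mem_Ici.2 (by positivity)) (abs_sub_le _ _ _)
      _ ≤ K * (φ |v x - ⨍ y in ball x r, v y| + φ |(⨍ y in ball x r, v y) - c|) :=
          young_add hφ hK (abs_nonneg _) (abs_nonneg _)
      _ ≤ _ := by gcongr
  have hmain : φ |v x - c| ≤ B * G ^ (((n : ℝ) - β) / n) := by
    rcases hG0.eq_or_lt with h | h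
    · -- here only the tail term remains, and it vanishes as the scale grows
      rw [← h, Real.zero_rpow (by positivity), mul_zero]
      have ht : Tendsto (fun r : ℝ => K * (C * r ^ (-((n : ℝ) - β)))) atTop (𝓝 0) := by
        simpa using ((tendsto_rpow_neg_atTop hnβ).const_mul C).const_mul K
      refine ge_of_tendsto ht ((eventually_gt_atTop 0).mono fun r hr => ?_)
      simpa [← h] using hsplit r hr
    · -- the scale `r = G ^ (-1/n)` balances the two terms
      refine (hsplit (G ^ (-(1 / (n : ℝ)))) (by positivity)).trans (le_of_eq ?_)
      have e1 : (G ^ (-(1 / (n : ℝ)))) ^ β * G = G ^ (((n : ℝ) - β) / n) := by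
        rw [← Real.rpow_mul hG0]
        nth_rewrite 2 [← Real.rpow_one G]
        rw [← Real.rpow_add h]
        congr 1; field_simp; ring
      have e2 : (G ^ (-(1 / (n : ℝ)))) ^ (β - n) = G ^ (((n : ℝ) - β) / n) := by
        rw [← Real.rpow_mul hG0]
        congr 1; field_simp; ring
      rw [e1, e2, hB]; ring
  rw [hGeq, ← ENNReal.ofReal_mul (by positivity)]
  apply ENNReal.ofReal_le_ofReal
  have hp : 0 ≤ (n : ℝ) / (n - β) := by positivity
  calc φ |v x - c| ^ ((n : ℝ) / (n - β))
      ≤ (max 1 B * G ^ (((n : ℝ) - β) / n)) ^ ((n : ℝ) / (n - β)) := by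
        refine Real.rpow_le_rpow (young_nonneg hφ (abs_nonneg _)) (hmain.trans ?_) hp
        gcongr
        exact le_max_right _ _
    _ = (max 1 B) ^ ((n : ℝ) / (n - β)) * G := by
        rw [Real.mul_rpow hA.le (by positivity), ← Real.rpow_mul hG0]
        rw [show ((n : ℝ) - β) / n * (n / (n - β)) = 1 by field_simp, Real.rpow_one]

end Balls

/-- global `(φ^{n/(n-β)},φ)_β`-Poincaré inequality on `ℝⁿ`, `0 < β < n`. -/
theorem poincare_orlicz_global
    (n : ℕ) (hn : 1 ≤ n) (β : ℝ) (hβ : β ∈ Set.Ioo (0 : ℝ) (n : ℝ))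
    (φ : ℝ → ℝ) (hφ : IsYoung φ) (hdbl : ∃ K : ℝ, IsDoubling φ K)
    (hCβ : CbetaFinite β φ) :
    ∃ C > (0 : ℝ), ∀ u : EuclideanSpace ℝ (Fin n) → ℝ,
      MemW n β φ Set.univ u →
        (⨅ c : ℝ, luxNorm n (fun t => φ t ^ ((n : ℝ) / ((n : ℝ) - β))) Set.univ
            (fun x => u x - c))
          ≤ ENNReal.ofReal C * fracNorm n β φ Set.univ u := by
  obtain ⟨K, hK⟩ := hdbl
  obtain ⟨A, hA1, hA⟩ := pointwise_bound hφ hK hβ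
  have hA0 : 0 < A := one_pos.trans_le hA1
  have hnβ : 0 < (n : ℝ) - β := sub_pos.2 hβ.2
  have hp : 0 ≤ (n : ℝ) / (n - β) := by positivity
  refine ⟨A, hA0, fun u hu => ?_⟩
  have hAne : ENNReal.ofReal A ≠ 0 := by simpa using hA0
  rw [mul_comm, ← ENNReal.div_le_iff hAne ENNReal.ofReal_ne_top]
  refine le_sInf ?_
  rintro lam ⟨hl0, hlt, hl⟩
  rw [ENNReal.div_le_iff hAne ENNReal.ofReal_ne_top]
  have hL : 0 < lam.toReal := ENNReal.toReal_pos hl0.ne' hlt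
  set L := lam.toReal with hLdef
  have hdiff : ∀ a b : ℝ, |a / L - b / L| = |a - b| / L := by
    intro a b; rw [← sub_div, abs_div, abs_of_pos hL]
  -- the seminorm is homogeneous, so work with `v = u / L`, whose modular is at most one
  have hv : LocallyIntegrable (fun x => u x / L) := by
    simp only [div_eq_inv_mul]
    exact (locallyIntegrableOn_univ.1 hu.1).smul L⁻¹
  have hI : ∫⁻ x, innerModular n β φ (fun x => u x / L) x ≤ 1 := by
    simpa only [fracIntegral, innerModular, Measure.restrict_univ, hdiff] using hl
  obtain ⟨c, hc⟩ := hA _ hv hI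
  refine (iInf_le _ (L * c)).trans (sInf_le ⟨?_, ?_, ?_⟩)
  · exact ENNReal.mul_pos hl0.ne' hAne
  · exact ENNReal.mul_ne_top hlt ENNReal.ofReal_ne_top
  · rw [Measure.restrict_univ, ENNReal.toReal_mul, ENNReal.toReal_ofReal hA0.le, ← hLdef]
    have hpt : ∀ x, ENNReal.ofReal (φ (|u x - L * c| / (L * A)) ^ ((n : ℝ) / (n - β))) ≤
        innerModular n β φ (fun x => u x / L) x := by
      intro x
      have e : |u x - L * c| / (L * A) = A⁻¹ * |u x / L - c| := by
        have := hdiff (u x) (L * c)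
        rw [mul_div_cancel_left₀ _ hL.ne'] at this
        rw [this]; field_simp
      have h1 := young_scale hφ (inv_nonneg.2 hA0.le) (inv_le_one_of_one_le₀ hA1)
        (abs_nonneg (u x / L - c))
      have hq : 0 < A ^ ((n : ℝ) / (n - β)) := Real.rpow_pos_of_pos hA0 _
      have h0 := young_nonneg hφ (abs_nonneg (u x / L - c))
      calc ENNReal.ofReal (φ (|u x - L * c| / (L * A)) ^ ((n : ℝ) / (n - β)))
          ≤ ENNReal.ofReal ((A⁻¹ * φ |u x / L - c|) ^ ((n : ℝ) / (n - β))) := by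
            rw [e]
            exact ENNReal.ofReal_le_ofReal
              (Real.rpow_le_rpow (young_nonneg hφ (by positivity)) h1 hp)
        _ = (ENNReal.ofReal (A ^ ((n : ℝ) / (n - β))))⁻¹ *
              ENNReal.ofReal (φ |u x / L - c| ^ ((n : ℝ) / (n - β))) := by
            rw [Real.mul_rpow (inv_nonneg.2 hA0.le) h0, Real.inv_rpow hA0.le,
              ENNReal.ofReal_mul (by positivity), ENNReal.ofReal_inv_of_pos hq]
        _ ≤ (ENNReal.ofReal (A ^ ((n : ℝ) / (n - β))))⁻¹ *
              (ENNReal.ofReal (A ^ ((n : ℝ) / (n - β))) *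
                innerModular n β φ (fun x => u x / L) x) := by
            gcongr
            exact hc x
        _ = innerModular n β φ (fun x => u x / L) x := by
            rw [← mul_assoc, ENNReal.inv_mul_cancel (by simpa using hq) ENNReal.ofReal_ne_top,
              one_mul]
    exact (lintegral_mono hpt).trans hI
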